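/- For every n with N_{t(n)-1} ≤ n < M_{t(n)-1} and every w ∈ 𝕏 one can write (Tⁿ)'(w) = K_n(w) · f_{t(n)-1}(Tⁿw) / f_{t(n)-1}(w), where K_n(w) := (Tⁿ)'(w) · f_{t(n)-1}(w) / f_{t(n)-1}(Tⁿw) satisfies lim_{n→∞} K_n(w) = 1 uniformly in w ∈ 𝕏 (n ranging over ∪_t [N_{t-1}, M_{t-1})). -/

import Mathlib

open MeasureTheory Filter Topology

noncomputable section

/-- The sequence space `{0,1}^ℤ`, with `true` playing the role of `1`. -/
abbrev Xspace := ℤ → Bool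

/-- The left shift `(Tw)_i = w_{i+1}`. -/
def shiftT (w : Xspace) : Xspace := fun i => w (i + 1)

/-- The inverse of the left shift, so that `P ∘ T = Measure.map shiftInv P`. -/
def shiftInv (w : Xspace) : Xspace := fun i => w (i - 1)

/-- `coordWt p b` is `P_k({b})` when `P_k({0}) = p`. -/
def coordWt (p : ℝ) (b : Bool) : ℝ := if b then 1 - p else p

/-- The set `A_t = {∏_{u=1}^t λ_u^{x_u} : x_u ∈ ℤ, |x_u| ≤ n_u}`. -/
def Aset (lam : ℕ → ℝ) (nn : ℕ → ℕ) (t : ℕ) : Set ℝ :=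
  {x | ∃ c : ℕ → ℤ, (∀ u, |c u| ≤ (nn u : ℤ)) ∧ x = ∏ u ∈ Finset.Icc 1 t, lam u ^ c u}

/-- The data of Kosloff's inductive construction: a summable sequence `ε_t > 0`,
`M_0 = 1`, `λ_t = exp(2^{-k_t})` with `k_t = ⌊log₂(M_{t-1}/ε_t)⌋ + 1`,
`n_t` a positive integer satisfying Property *, `N_t = M_{t-1} + n_t`,
`m_t = N_t (2 + 2^{3N_t})`, `M_t = N_t + m_t`. -/
structure KosloffData where
  eps : ℕ → ℝ
  lam : ℕ → ℝ
  nn : ℕ → ℕ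
  M : ℕ → ℕ
  N : ℕ → ℕ
  m : ℕ → ℕ
  eps_pos : ∀ t, 1 ≤ t → 0 < eps t
  eps_summable : Summable eps
  M_zero : M 0 = 1
  lam_def : ∀ t, 1 ≤ t →
    lam t = Real.exp ((2 : ℝ) ^ (-(⌊Real.logb 2 ((M (t - 1) : ℝ) / eps t)⌋ + 1)))
  nn_pos : ∀ t, 1 ≤ t → 0 < nn t
  prop_star : ∀ t, 1 ≤ t → ∀ a ∈ Aset lam nn (t - 1), a ^ 2 ≤ lam t ^ ((nn t : ℝ) / 4)
  N_def : ∀ t, 1 ≤ t → N t = M (t - 1) + nn t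
  m_def : ∀ t, 1 ≤ t → m t = N t * (2 + 2 ^ (3 * N t))
  M_def : ∀ t, 1 ≤ t → M t = N t + m t

/-- `P` is the product measure `∏_k P_k` of Kosloff's construction, where `p k = P_k({0})`:
`p k = 1/2` for `k ≥ 0`, `p k = 1/(1+λ_t)` for `-N_t < k ≤ -M_{t-1}`, and `p k = 1/2`
for `-M_t < k ≤ -N_t`; cylinders get product mass. -/
def IsKosloffMeasure (D : KosloffData) (p : ℤ → ℝ) (P : Measure Xspace) : Prop :=
  IsProbabilityMeasure P ∧
  (∀ k : ℤ, 0 ≤ k → p k = 1 / 2) ∧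
  (∀ t : ℕ, 1 ≤ t → ∀ k : ℤ, -(D.N t : ℤ) < k → k ≤ -(D.M (t - 1) : ℤ) →
      p k = 1 / (1 + D.lam t)) ∧
  (∀ t : ℕ, 1 ≤ t → ∀ k : ℤ, -(D.M t : ℤ) < k → k ≤ -(D.N t : ℤ) → p k = 1 / 2) ∧
  (∀ k l : ℤ, ∀ b : ℤ → Bool,
    P {w : Xspace | ∀ i ∈ Finset.Icc k l, w i = b i}
      = ∏ i ∈ Finset.Icc k l, ENNReal.ofReal (coordWt (p i) (b i)))

/-- The Radon–Nikodym derivative `(Tⁿ)' = d(P∘Tⁿ)/dP`. -/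
def rnD (P : Measure Xspace) (n : ℕ) : Xspace → ENNReal :=
  Measure.rnDeriv (Measure.map (shiftInv^[n]) P) P

/-- `T` is nonsingular: `P∘T` and `P` are mutually absolutely continuous. -/
def ShiftNonsingular (P : Measure Xspace) : Prop :=
  Measure.map shiftInv P ≪ P ∧ P ≪ Measure.map shiftInv P

/-- The ratio set `R(T,P)` of the shift. -/
def ratioSet (P : Measure Xspace) : Set ℝ :=
  {a | 0 ≤ a ∧ ∀ A : Set Xspace, MeasurableSet A → 0 < P A → ∀ ε : ℝ, 0 < ε → ∃ n : ℕ,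
      0 < P (A ∩ shiftT^[n] ⁻¹' A ∩ {w | |(rnD P n w).toReal - a| ≤ ε})}

/-- `t(n) = min {t ≥ 1 : n < N_t}`. -/
def tOf (D : KosloffData) (n : ℕ) : ℕ := sInf {t : ℕ | 1 ≤ t ∧ n < D.N t}

/-- `Υ_u(w) = ∑_{k=-N_u+1}^{-M_{u-1}} w_k`. -/
def Ups (D : KosloffData) (u : ℕ) (w : Xspace) : ℤ :=
  ∑ k ∈ Finset.Icc (-(D.N u : ℤ) + 1) (-(D.M (u - 1) : ℤ)), (if w k then 1 else 0)

/-- `f_t(w) = ∏_{u=1}^t λ_u^{Υ_u(w)}`. -/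
def fT (D : KosloffData) (t : ℕ) (w : Xspace) : ℝ :=
  ∏ u ∈ Finset.Icc 1 t, D.lam u ^ Ups D u w

/-- The ratio `P_{k-n}({w_k}) / P_k({w_k})`. -/
def rr (p : ℤ → ℝ) (n : ℕ) (w : Xspace) (k : ℤ) : ℝ :=
  coordWt (p (k - n)) (w k) / coordWt (p k) (w k)

/-- A general product measure on `{0,1}^ℤ` with `q k = P_k({1})`. -/
def IsProductMeasure (q : ℤ → ℝ) (P : Measure Xspace) : Prop :=
  IsProbabilityMeasure P ∧
  ∀ k l : ℤ, ∀ b : ℤ → Bool,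
    P {w : Xspace | ∀ i ∈ Finset.Icc k l, w i = b i}
      = ∏ i ∈ Finset.Icc k l, ENNReal.ofReal (if b i then q i else 1 - q i)

/-!
On the window of coordinates `(-M_s + n, M_s]`, with `n ≤ N_s`, the density of `P ∘ Tⁿ` with
respect to `P` is exactly `f_s(Tⁿw) / f_s(w)`: a coordinate with `P_k({0}) = 1/(1+λ_u)`
contributes the odds `λ_u^{w_k}`, and shifting only exchanges unbiased coordinates at the two
ends. Shifting by `n` changes each `Υ_u` by at most `n`, so for `n ≤ M_s` passing from `s` to
`s + 1` changes the logarithm of this ratio by at most `M_s log λ_{s+1} ≤ ε_{s+1}`. Hence, for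
`n ≤ M_t`, all the window densities with `s > t` lie within a factor `exp(±∑_{u>t} ε_u)` of
`f_t(Tⁿw) / f_t(w)`. Since the windows exhaust `ℤ`, the same bounds hold between the measures, and
therefore for the Radon–Nikodym derivative.
-/

section MeasureComparison

open scoped ENNReal symmDiff

variable {α : Type*} [MeasurableSpace α] {μ ν : Measure α}

theorem rnDeriv_le_of_le_withDensity [SigmaFinite ν] {f : α → ℝ≥0∞} (h : μ ≤ ν.withDensity f) :
    μ.rnDeriv ν ≤ᵐ[ν] f :=
  ae_le_of_forall_setLIntegral_le_of_sigmaFinite (Measure.measurable_rnDeriv _ _)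
    fun s hs _ => calc
      ∫⁻ x in s, μ.rnDeriv ν x ∂ν ≤ μ s := Measure.setLIntegral_rnDeriv_le s
      _ ≤ ν.withDensity f s := h s
      _ = ∫⁻ x in s, f x ∂ν := withDensity_apply _ hs

theorem le_rnDeriv_of_withDensity_le [SigmaFinite ν] [μ.HaveLebesgueDecomposition ν]
    (hμν : μ ≪ ν) {f : α → ℝ≥0∞} (hf : Measurable f) (h : ν.withDensity f ≤ μ) :
    f ≤ᵐ[ν] μ.rnDeriv ν :=
  ae_le_of_forall_setLIntegral_le_of_sigmaFinite hf fun s hs _ => calc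
    ∫⁻ x in s, f x ∂ν = ν.withDensity f s := (withDensity_apply _ hs).symm
    _ ≤ μ s := h s
    _ = ∫⁻ x in s, μ.rnDeriv ν x ∂ν := (Measure.setLIntegral_rnDeriv hμν s).symm

theorem withDensity_apply_of_eqOn_const {f : α → ℝ≥0∞} {c : ℝ≥0∞} {s : Set α}
    (hs : MeasurableSet s) (hf : s.EqOn f fun _ => c) : μ.withDensity f s = c * μ s := by
  rw [withDensity_apply _ hs, setLIntegral_congr_fun hs hf, setLIntegral_const]

theorem measure_le_of_forall_singleton_le [Countable α] [MeasurableSingletonClass α]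
    (h : ∀ a, μ {a} ≤ ν {a}) : μ ≤ ν := by
  refine Measure.le_iff.2 fun s hs => ?_
  rw [← μ.tsum_indicator_apply_singleton s hs, ← ν.tsum_indicator_apply_singleton s hs]
  exact ENNReal.tsum_le_tsum fun a => Set.indicator_le_indicator (h a)

theorem measure_le_of_isSetRing [IsFiniteMeasure μ] [IsFiniteMeasure ν] {C : Set (Set α)}
    (hC : IsSetRing C) (huniv : Set.univ ∈ C)
    (hgen : ‹MeasurableSpace α› = MeasurableSpace.generateFrom C)
    (h : ∀ s ∈ C, μ s ≤ ν s) : μ ≤ ν := by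
  refine Measure.le_iff.2 fun s hs => ENNReal.le_of_forall_pos_le_add fun ε hε _ => ?_
  obtain ⟨r, hrC, hr⟩ : ∃ r ∈ C, (μ + ν) (r ∆ s) < ε :=
    exists_measure_symmDiff_lt_of_generateFrom_isSetRing hC
      ⟨{Set.univ}, Set.countable_singleton _, by simpa using huniv, by simp⟩ hgen hs (by simpa)
  have sdiff_le : μ (s \ r) + ν (r \ s) ≤ ε := calc
    μ (s \ r) + ν (r \ s) ≤ μ (r ∆ s) + ν (r ∆ s) := by
      gcongr
      exacts [Set.subset_union_right, Set.subset_union_left]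
    _ ≤ ε := hr.le
  calc μ s ≤ μ r + μ (s \ r) := tsub_le_iff_left.1 le_measure_sdiff
    _ ≤ ν r + μ (s \ r) := add_le_add_left (h r hrC) _
    _ ≤ ν s + ν (r \ s) + μ (s \ r) := by gcongr; exact tsub_le_iff_left.1 le_measure_sdiff
    _ ≤ ν s + ε := by rw [add_assoc, add_comm (ν _) (μ _)]; gcongr

end MeasureComparison

section Cylinders

variable {ι : Type*} {X : ι → Type*}

theorem restrict_preimage_singleton_restrict (J : Finset ι) (b : ∀ i, X i) :
    J.restrict ⁻¹' {J.restrict b} = {w : ∀ i, X i | ∀ i ∈ J, w i = b i} := by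
  ext w
  simp [funext_iff]

variable [∀ i, MeasurableSpace (X i)] {μ ν : Measure (∀ i, X i)}

theorem measure_le_of_frequently_map_restrict_le [IsFiniteMeasure μ] [IsFiniteMeasure ν]
    (h : ∃ᶠ J : Finset ι in atTop, μ.map J.restrict ≤ ν.map J.restrict) : μ ≤ ν := by
  refine measure_le_of_isSetRing isSetRing_measurableCylinders
    (univ_mem_measurableCylinders _) generateFrom_measurableCylinders.symm fun s hs => ?_
  obtain ⟨I, S, hS, rfl⟩ := (mem_measurableCylinders s).1 hs
  obtain ⟨J, hIJ, hJ⟩ := frequently_atTop.1 h I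
  have hS' : MeasurableSet (Finset.restrict₂ (π := X) hIJ ⁻¹' S) :=
    Finset.measurable_restrict₂ hIJ hS
  have := hJ (Finset.restrict₂ (π := X) hIJ ⁻¹' S)
  rwa [Measure.map_apply J.measurable_restrict hS',
    Measure.map_apply J.measurable_restrict hS'] at this

variable [∀ i, MeasurableSingletonClass (X i)]

theorem measurableSet_forall_mem_eq (J : Finset ι) (b : ∀ i, X i) :
    MeasurableSet {w : ∀ i, X i | ∀ i ∈ J, w i = b i} := by
  rw [← restrict_preimage_singleton_restrict]
  exact J.measurable_restrict (measurableSet_singleton _)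

theorem map_restrict_le_of_forall_cylinder_le [∀ i, Countable (X i)] {J : Finset ι}
    (h : ∀ b : ∀ i, X i, μ {w | ∀ i ∈ J, w i = b i} ≤ ν {w | ∀ i ∈ J, w i = b i}) :
    μ.map J.restrict ≤ ν.map J.restrict := by
  refine measure_le_of_forall_singleton_le fun y => ?_
  rw [Measure.map_apply J.measurable_restrict (measurableSet_singleton y),
    Measure.map_apply J.measurable_restrict (measurableSet_singleton y)]
  by_cases hy : y ∈ Set.range (J.restrict (π := X))
  · obtain ⟨b, rfl⟩ := hy
    simpa only [restrict_preimage_singleton_restrict] using h b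
  · simp [Set.preimage_singleton_eq_empty.2 hy]

end Cylinders

section FiniteIntervals

theorem prod_Ioc_mul_prod_Ioc {ι R : Type*} [LinearOrder ι] [LocallyFiniteOrder ι] [CommMonoid R]
    (f : ι → R) {a b c : ι} (hab : a ≤ b) (hbc : b ≤ c) :
    (∏ k ∈ Finset.Ioc a b, f k) * ∏ k ∈ Finset.Ioc b c, f k = ∏ k ∈ Finset.Ioc a c, f k := by
  rw [← Finset.prod_union (Finset.Ioc_disjoint_Ioc_of_le le_rfl),
    Finset.Ioc_union_Ioc_eq_Ioc hab hbc]

variable {R : Type*} [CommRing R] [LinearOrder R] [IsStrictOrderedRing R]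

theorem sum_le_sum_add_card_of_subset_union {κ : Type*} [DecidableEq κ] {g : κ → R}
    (hg : ∀ k, g k ∈ Set.Icc 0 1) {A B C : Finset κ} (hA : A ⊆ B ∪ C) :
    ∑ k ∈ A, g k ≤ ∑ k ∈ B, g k + C.card := calc
  ∑ k ∈ A, g k ≤ ∑ k ∈ B ∪ C, g k :=
    Finset.sum_le_sum_of_subset_of_nonneg hA fun k _ _ => (hg k).1
  _ ≤ ∑ k ∈ B, g k + ∑ k ∈ C, g k := by
    rw [← Finset.sum_union_inter]
    exact le_add_of_nonneg_right (Finset.sum_nonneg fun k _ => (hg k).1)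
  _ ≤ ∑ k ∈ B, g k + C.card := by
    grw [Finset.sum_le_card_nsmul C g 1 fun k _ => (hg k).2, nsmul_one]

theorem abs_sum_Ioc_add_sub_sum_Ioc_le {g : ℤ → R} (hg : ∀ k, g k ∈ Set.Icc 0 1) (a b : ℤ)
    (n : ℕ) : |∑ k ∈ Finset.Ioc a b, g (k + n) - ∑ k ∈ Finset.Ioc a b, g k| ≤ n := by
  have shift : ∑ k ∈ Finset.Ioc a b, g (k + n) = ∑ k ∈ Finset.Ioc (a + n) (b + n), g k := by
    rw [← Finset.map_add_right_Ioc, Finset.sum_map]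
    rfl
  have upper : ∑ k ∈ Finset.Ioc (a + n) (b + n), g k ≤ ∑ k ∈ Finset.Ioc a b, g k + n := by
    simpa using sum_le_sum_add_card_of_subset_union hg (A := Finset.Ioc (a + n) (b + n))
      (B := Finset.Ioc a b) (C := Finset.Ioc b (b + n)) (by intro k; simp; omega)
  have lower : ∑ k ∈ Finset.Ioc a b, g k ≤ ∑ k ∈ Finset.Ioc (a + n) (b + n), g k + n := by
    simpa using sum_le_sum_add_card_of_subset_union hg (A := Finset.Ioc a b)
      (B := Finset.Ioc (a + n) (b + n)) (C := Finset.Ioc a (a + n)) (by intro k; simp; omega)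
  rw [shift, abs_sub_le_iff]
  exact ⟨by linarith, by linarith⟩

end FiniteIntervals

section Shift

theorem shiftInv_iterate_apply (n : ℕ) (w : Xspace) (i : ℤ) : shiftInv^[n] w i = w (i - n) := by
  induction n generalizing w with
  | zero => simp
  | succ n ih => simp [Function.iterate_succ_apply, ih, shiftInv, sub_sub]

theorem shiftT_iterate_apply (n : ℕ) (w : Xspace) (i : ℤ) : shiftT^[n] w i = w (i + n) := by
  induction n generalizing w with
  | zero => simp
  | succ n ih => simp [Function.iterate_succ_apply, ih, shiftT, add_assoc]

theorem measurable_shiftInv : Measurable shiftInv :=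
  measurable_pi_lambda _ fun i => measurable_pi_apply (i - 1)

theorem continuous_shiftT : Continuous shiftT :=
  continuous_pi fun i => continuous_apply (i + 1)

theorem shiftInv_iterate_preimage_cylinder (n : ℕ) (a l : ℤ) (b : Xspace) :
    shiftInv^[n] ⁻¹' {w | ∀ i ∈ Finset.Ioc (a + n) l, w i = b i}
      = {w | ∀ i ∈ Finset.Ioc a (l - n), w i = shiftT^[n] b i} := by
  ext w
  simp only [Set.mem_preimage, Set.mem_ofPred_eq, shiftInv_iterate_apply, shiftT_iterate_apply,
    Finset.mem_Ioc]
  refine ⟨fun h i hi => ?_, fun h i hi => ?_⟩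
  · simpa using h (i + n) (by omega)
  · simpa using h (i - n) (by omega)

end Shift

namespace KosloffData

variable (D : KosloffData)

theorem M_lt_N_succ (t : ℕ) : D.M t < D.N (t + 1) := by
  have := D.N_def (t + 1) t.succ_pos
  have := D.nn_pos (t + 1) t.succ_pos
  simp only [Nat.add_sub_cancel] at *
  omega

theorem two_mul_N_le_M {t : ℕ} (ht : 1 ≤ t) : 2 * D.N t ≤ D.M t := by
  rw [D.M_def t ht, D.m_def t ht]
  nlinarith [Nat.zero_le (D.N t * 2 ^ (3 * D.N t))]

theorem M_strictMono : StrictMono D.M :=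
  strictMono_nat_of_lt_succ fun t => by
    have := D.M_lt_N_succ t
    have := D.two_mul_N_le_M (Nat.le_add_left 1 t)
    omega

theorem M_lt_N {s t : ℕ} (hst : s < t) : D.M s < D.N t := by
  obtain ⟨t, rfl⟩ := Nat.exists_eq_succ_of_ne_zero (Nat.ne_zero_of_lt hst)
  exact (D.M_strictMono.monotone (Nat.lt_succ_iff.1 hst)).trans_lt (D.M_lt_N_succ t)

theorem N_le_N {s t : ℕ} (hs : 1 ≤ s) (hst : s ≤ t) : D.N s ≤ D.N t := by
  rcases hst.eq_or_lt with rfl | hst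
  · rfl
  · linarith [D.two_mul_N_le_M hs, D.M_lt_N hst]

theorem one_le_tOf_and_lt_N_tOf (n : ℕ) : 1 ≤ tOf D n ∧ n < D.N (tOf D n) :=
  Nat.sInf_mem (s := {t | 1 ≤ t ∧ n < D.N t})
    ⟨n + 1, n.succ_pos, D.M_strictMono.le_apply.trans_lt (D.M_lt_N_succ n)⟩

theorem tendsto_tOf_atTop : Tendsto (tOf D) atTop atTop := by
  refine tendsto_atTop.2 fun t => (eventually_ge_atTop (D.N t)).mono fun n hn => ?_
  obtain ⟨one_le, lt_N⟩ := D.one_le_tOf_and_lt_N_tOf n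
  by_contra! hlt
  exact (lt_N.trans_le (D.N_le_N one_le hlt.le)).not_ge hn

theorem lam_pos {t : ℕ} (ht : 1 ≤ t) : 0 < D.lam t :=
  D.lam_def t ht ▸ Real.exp_pos _

theorem log_lam_nonneg {t : ℕ} (ht : 1 ≤ t) : 0 ≤ Real.log (D.lam t) := by
  rw [D.lam_def t ht, Real.log_exp]
  positivity

theorem M_mul_log_lam_succ_le (t : ℕ) : D.M t * Real.log (D.lam (t + 1)) ≤ D.eps (t + 1) := by
  have heps : 0 < D.eps (t + 1) := D.eps_pos _ t.succ_pos
  have hM : (0 : ℝ) < D.M t := by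
    exact_mod_cast (D.M_zero ▸ D.M_strictMono.monotone t.zero_le : 1 ≤ D.M t)
  have ratio_le : D.M t / D.eps (t + 1)
      ≤ (2 : ℝ) ^ (⌊Real.logb 2 (D.M t / D.eps (t + 1))⌋ + 1) := by
    rw [← Real.rpow_intCast, ← Real.logb_le_iff_le_rpow one_lt_two (by positivity)]
    push_cast
    exact (Int.lt_floor_add_one _).le
  rw [D.lam_def _ (Nat.le_add_left 1 t), Real.log_exp, Nat.add_sub_cancel, zpow_neg,
    ← div_eq_mul_inv, div_le_iff₀ (by positivity), mul_comm, ← div_le_iff₀ heps]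
  exact ratio_le

/-- The tail `∑_{u > t} ε_u`. -/
def epsTail (t : ℕ) : ℝ := ∑' u, D.eps (u + (t + 1))

theorem sum_Ico_eps_le_epsTail {t s : ℕ} : ∑ u ∈ Finset.Ico t s, D.eps (u + 1) ≤ D.epsTail t := by
  rw [Finset.sum_Ico_eq_sum_range]
  simp only [epsTail, add_comm t, add_assoc]
  exact ((summable_nat_add_iff _).2 D.eps_summable).sum_le_tsum _
    fun u _ => (D.eps_pos _ (by omega)).le

theorem tendsto_epsTail : Tendsto D.epsTail atTop (𝓝 0) :=
  (tendsto_sum_nat_add D.eps).comp (tendsto_add_atTop_nat 1)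

theorem abs_Ups_shiftT_iterate_sub_Ups_le (u n : ℕ) (w : Xspace) :
    |Ups D u (shiftT^[n] w) - Ups D u w| ≤ n := by
  simpa only [Ups, Finset.Icc_add_one_left_eq_Ioc, shiftT_iterate_apply] using
    abs_sum_Ioc_add_sub_sum_Ioc_le (g := fun k => if w k then (1 : ℤ) else 0)
      (fun k => by split_ifs <;> simp) _ _ n

theorem lam_zpow_Ups (u : ℕ) (w : Xspace) :
    D.lam u ^ Ups D u w
      = ∏ k ∈ Finset.Ioc (-(D.N u : ℤ)) (-D.M (u - 1)), if w k then D.lam u else 1 := by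
  rw [Ups, Finset.Icc_add_one_left_eq_Ioc, Finset.sum_boole, Finset.prod_ite, Finset.prod_const,
    Finset.prod_const_one, mul_one, zpow_natCast]

theorem fT_pos (t : ℕ) (w : Xspace) : 0 < fT D t w :=
  Finset.prod_pos fun _ hu => zpow_pos (D.lam_pos (Finset.mem_Icc.1 hu).1) _

theorem fT_succ (t : ℕ) (w : Xspace) :
    fT D (t + 1) w = fT D t w * D.lam (t + 1) ^ Ups D (t + 1) w :=
  Finset.prod_Icc_succ_top (Nat.le_add_left 1 t) _

theorem continuous_fT (t : ℕ) : Continuous (fT D t) := by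
  have continuous_Ups (u : ℕ) : Continuous (Ups D u) :=
    continuous_finsetSum _ fun k _ =>
      (continuous_of_discreteTopology (f := fun b : Bool => if b then (1 : ℤ) else 0)).comp
        (continuous_apply k)
  exact continuous_finsetProd _ fun u _ =>
    (continuous_of_discreteTopology (f := fun j : ℤ => D.lam u ^ j)).comp (continuous_Ups u)

theorem dependsOn_fT (t : ℕ) : DependsOn (fT D t) (Set.Ioc (-(D.M t : ℤ)) 0) := by
  refine fun w w' hw => Finset.prod_congr rfl fun u hu => ?_
  obtain ⟨one_le, u_le⟩ := Finset.mem_Icc.1 hu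
  have N_le_M : D.N u ≤ D.M t := by
    linarith [D.two_mul_N_le_M one_le, D.M_strictMono.monotone u_le]
  have Ups_eq : Ups D u w = Ups D u w' := Finset.sum_congr rfl fun k hk => by
    rw [Finset.mem_Icc] at hk
    rw [hw k ⟨by omega, by omega⟩]
  rw [Ups_eq]

/-- The ratio `f_t(Tⁿw) / f_t(w)`, to be compared with `(Tⁿ)'(w)`. -/
def fRatio (t n : ℕ) (w : Xspace) : ℝ := fT D t (shiftT^[n] w) / fT D t w

theorem fRatio_pos (t n : ℕ) (w : Xspace) : 0 < D.fRatio t n w :=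
  div_pos (D.fT_pos t _) (D.fT_pos t w)

theorem continuous_fRatio (t n : ℕ) : Continuous (D.fRatio t n) :=
  ((D.continuous_fT t).comp (continuous_shiftT.iterate n)).div (D.continuous_fT t)
    fun w => (D.fT_pos t w).ne'

theorem dependsOn_fRatio (t n : ℕ) : DependsOn (D.fRatio t n) (Set.Ioc (-(D.M t : ℤ)) n) := by
  intro w w' hw
  have shifted : fT D t (shiftT^[n] w) = fT D t (shiftT^[n] w') :=
    D.dependsOn_fT t fun k hk => by
      simpa only [shiftT_iterate_apply] using hw (k + n) ⟨by linarith [hk.1], by linarith [hk.2]⟩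
  have unshifted : fT D t w = fT D t w' :=
    D.dependsOn_fT t fun k hk => hw k ⟨hk.1, by linarith [hk.2]⟩
  rw [fRatio, fRatio, shifted, unshifted]

theorem fRatio_succ (t n : ℕ) (w : Xspace) :
    D.fRatio (t + 1) n w
      = D.fRatio t n w * D.lam (t + 1) ^ (Ups D (t + 1) (shiftT^[n] w) - Ups D (t + 1) w) := by
  rw [fRatio, fRatio, fT_succ, fT_succ, zpow_sub₀ (D.lam_pos (Nat.le_add_left 1 t)).ne',
    mul_div_mul_comm]

theorem dist_log_fRatio_succ_le {t n : ℕ} (hn : n ≤ D.M t) (w : Xspace) :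
    dist (Real.log (D.fRatio t n w)) (Real.log (D.fRatio (t + 1) n w)) ≤ D.eps (t + 1) := by
  have lam_pos : 0 < D.lam (t + 1) := D.lam_pos (Nat.le_add_left 1 t)
  have log_nonneg : 0 ≤ Real.log (D.lam (t + 1)) := D.log_lam_nonneg (Nat.le_add_left 1 t)
  have abs_Ups_le : |((Ups D (t + 1) (shiftT^[n] w) - Ups D (t + 1) w : ℤ) : ℝ)| ≤ D.M t := by
    exact_mod_cast (D.abs_Ups_shiftT_iterate_sub_Ups_le (t + 1) n w).trans (by exact_mod_cast hn)
  rw [fRatio_succ, Real.log_mul (D.fRatio_pos t n w).ne' (zpow_pos lam_pos _).ne', Real.log_zpow,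
    dist_self_add_right, Real.norm_eq_abs, abs_mul, abs_of_nonneg log_nonneg]
  exact (mul_le_mul_of_nonneg_right abs_Ups_le log_nonneg).trans (D.M_mul_log_lam_succ_le t)

theorem abs_log_fRatio_sub_log_fRatio_le {t s n : ℕ} (hts : t ≤ s) (hn : n ≤ D.M t)
    (w : Xspace) :
    |Real.log (D.fRatio s n w) - Real.log (D.fRatio t n w)| ≤ D.epsTail t := by
  rw [abs_sub_comm, ← Real.dist_eq]
  exact (dist_le_Ico_sum_of_dist_le hts fun htu _ =>
    D.dist_log_fRatio_succ_le (hn.trans (D.M_strictMono.monotone htu)) w).trans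
      D.sum_Ico_eps_le_epsTail

theorem fRatio_mem_Icc {t s n : ℕ} (hts : t ≤ s) (hn : n ≤ D.M t) (w : Xspace) :
    D.fRatio s n w ∈ Set.Icc (Real.exp (-D.epsTail t) * D.fRatio t n w)
      (Real.exp (D.epsTail t) * D.fRatio t n w) := by
  obtain ⟨lower, upper⟩ := abs_sub_le_iff.1 (D.abs_log_fRatio_sub_log_fRatio_le hts hn w)
  have hs := Real.exp_log (D.fRatio_pos s n w)
  have ht := Real.exp_log (D.fRatio_pos t n w)
  rw [← hs, ← ht, ← Real.exp_add, ← Real.exp_add]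
  exact ⟨Real.exp_le_exp.2 (by linarith), Real.exp_le_exp.2 (by linarith)⟩

/-- The coordinates `(-M_s + n, M_s]`. On them the density of `P ∘ Tⁿ` with respect to `P` is
exactly `fRatio s n`, because `p = 1/2` on both shifted-in ends. -/
def window (n s : ℕ) : Finset ℤ := Finset.Ioc (-(D.M s : ℤ) + n) (D.M s)

theorem tendsto_window (n : ℕ) : Tendsto (D.window n) atTop atTop := by
  refine tendsto_atTop_finset_of_monotone (fun s s' hs => ?_) fun k => ⟨n + k.natAbs + 1, ?_⟩
  · have := D.M_strictMono.monotone hs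
    exact Finset.Ioc_subset_Ioc (by omega) (by omega)
  · have := D.M_strictMono.le_apply (x := n + k.natAbs + 1)
    exact Finset.mem_Ioc.2 ⟨by omega, by omega⟩

theorem measure_le_of_eventually_window_le {μ ν : Measure Xspace} [IsFiniteMeasure μ]
    [IsFiniteMeasure ν] (n : ℕ)
    (h : ∀ᶠ s in atTop, ∀ b : Xspace,
      μ {w | ∀ i ∈ D.window n s, w i = b i} ≤ ν {w | ∀ i ∈ D.window n s, w i = b i}) :
    μ ≤ ν :=
  measure_le_of_frequently_map_restrict_le <| (D.tendsto_window n).frequently <|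
    (h.mono fun _ => map_restrict_le_of_forall_cylinder_le).frequently

theorem withDensity_window {t s n : ℕ} (hn : n ≤ D.M t) (hts : t < s) (P : Measure Xspace)
    (g : ℝ → ENNReal) (b : Xspace) :
    P.withDensity (fun w => g (D.fRatio t n w)) {w | ∀ i ∈ D.window n s, w i = b i}
      = g (D.fRatio t n b) * P {w | ∀ i ∈ D.window n s, w i = b i} := by
  have M_lt_N := D.M_lt_N hts
  have N_le_M := D.two_mul_N_le_M (Nat.one_le_of_lt hts)
  refine withDensity_apply_of_eqOn_const (measurableSet_forall_mem_eq _ b) fun w hw => ?_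
  refine congrArg g (D.dependsOn_fRatio t n fun k hk => hw k (Finset.mem_Ioc.2 ⟨?_, ?_⟩))
  · have := hk.1; omega
  · have := hk.2; omega

theorem isFiniteMeasure_withDensity_fRatio (P : Measure Xspace) [IsFiniteMeasure P] (c : ℝ)
    (t n : ℕ) :
    IsFiniteMeasure (P.withDensity fun w => ENNReal.ofReal (c * D.fRatio t n w)) :=
  isFiniteMeasure_withDensity_ofReal <| Integrable.hasFiniteIntegral <|
    (continuous_const.mul (D.continuous_fRatio t n)).integrable_of_hasCompactSupport
      (HasCompactSupport.of_compactSpace _)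

end KosloffData

theorem coordWt_half (b : Bool) : coordWt (1 / 2) b = 1 / 2 := by
  norm_num [coordWt]

theorem coordWt_nonneg {q : ℝ} (hq : q ∈ Set.Icc 0 1) (b : Bool) : 0 ≤ coordWt q b := by
  unfold coordWt
  split_ifs
  exacts [sub_nonneg.2 hq.2, hq.1]

theorem coordWt_one_div_one_add_div {a : ℝ} (ha : 1 + a ≠ 0) (b : Bool) :
    coordWt (1 / (1 + a)) b / (1 / (1 + a)) = if b then a else 1 := by
  unfold coordWt
  split_ifs <;> field_simp
  ring

theorem prod_coordWt_div_eq_one {p : ℤ → ℝ} {J : Finset ℤ} (hJ : ∀ k ∈ J, p k = 1 / 2)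
    (w : Xspace) :
    ∏ k ∈ J, coordWt (p k) (w k) / p k = 1 :=
  Finset.prod_eq_one fun k hk => by rw [hJ k hk, coordWt_half, div_self (by norm_num)]

namespace IsKosloffMeasure

variable {D : KosloffData} {p : ℤ → ℝ} {P : Measure Xspace}

theorem p_eq_half_of_nonneg (hP : IsKosloffMeasure D p P) {k : ℤ} (hk : 0 ≤ k) : p k = 1 / 2 :=
  hP.2.1 k hk

theorem p_eq_one_div (hP : IsKosloffMeasure D p P) {t : ℕ} {k : ℤ}
    (hk : k ∈ Finset.Ioc (-(D.N (t + 1) : ℤ)) (-D.M t)) : p k = 1 / (1 + D.lam (t + 1)) :=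
  hP.2.2.1 (t + 1) (Nat.le_add_left 1 t) k (Finset.mem_Ioc.1 hk).1 (Finset.mem_Ioc.1 hk).2

theorem p_eq_half_of_mem_Ioc (hP : IsKosloffMeasure D p P) {t : ℕ} (ht : 1 ≤ t) {k : ℤ}
    (hk : k ∈ Finset.Ioc (-(D.M t : ℤ)) (-D.N t)) : p k = 1 / 2 :=
  hP.2.2.2.1 t ht k (Finset.mem_Ioc.1 hk).1 (Finset.mem_Ioc.1 hk).2

theorem p_mem_Ioo (hP : IsKosloffMeasure D p P) (k : ℤ) : p k ∈ Set.Ioo 0 1 := by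
  have half_mem : (1 / 2 : ℝ) ∈ Set.Ioo 0 1 := by norm_num
  suffices ∀ t : ℕ, -(D.M t : ℤ) < k → p k ∈ Set.Ioo 0 1 by
    have le_M := D.M_strictMono.le_apply (x := k.natAbs + 1)
    exact this (k.natAbs + 1) (by omega)
  intro t
  induction t with
  | zero =>
    intro hk
    rw [D.M_zero] at hk
    exact hP.p_eq_half_of_nonneg (show 0 ≤ k by omega) ▸ half_mem
  | succ t ih =>
    intro hk
    rcases le_or_gt k (-D.N (t + 1)) with k_le_N | N_lt_k
    · exact hP.p_eq_half_of_mem_Ioc (Nat.le_add_left 1 t) (Finset.mem_Ioc.2 ⟨hk, k_le_N⟩) ▸ half_mem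
    rcases le_or_gt k (-D.M t) with k_le_M | M_lt_k
    · have := D.lam_pos (Nat.le_add_left 1 t)
      rw [hP.p_eq_one_div (Finset.mem_Ioc.2 ⟨N_lt_k, k_le_M⟩)]
      exact ⟨by positivity, (div_lt_one (by positivity)).2 (by linarith)⟩
    · exact ih M_lt_k

theorem cylinder_apply (hP : IsKosloffMeasure D p P) (a l : ℤ) (b : Xspace) :
    P {w | ∀ i ∈ Finset.Ioc a l, w i = b i}
      = ENNReal.ofReal (∏ i ∈ Finset.Ioc a l, coordWt (p i) (b i)) := by
  have weight_nonneg (i : ℤ) : 0 ≤ coordWt (p i) (b i) :=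
    coordWt_nonneg (Set.Ioo_subset_Icc_self (hP.p_mem_Ioo i)) _
  rw [ENNReal.ofReal_prod_of_nonneg fun i _ => weight_nonneg i,
    ← Finset.Icc_add_one_left_eq_Ioc]
  exact hP.2.2.2.2 (a + 1) l b

theorem prod_coordWt_div_eq_lam_zpow (hP : IsKosloffMeasure D p P) (t : ℕ) (w : Xspace) :
    ∏ k ∈ Finset.Ioc (-(D.N (t + 1) : ℤ)) (-D.M t), coordWt (p k) (w k) / p k
      = D.lam (t + 1) ^ Ups D (t + 1) w := by
  rw [D.lam_zpow_Ups, Nat.add_sub_cancel]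
  have lam_pos := D.lam_pos (Nat.le_add_left 1 t)
  exact Finset.prod_congr rfl fun k hk => by
    rw [hP.p_eq_one_div hk, coordWt_one_div_one_add_div (by positivity)]

theorem prod_coordWt_div_eq_fT (hP : IsKosloffMeasure D p P) (s : ℕ) {l : ℤ} (hl : 0 ≤ l)
    (w : Xspace) :
    ∏ k ∈ Finset.Ioc (-(D.M s : ℤ)) l, coordWt (p k) (w k) / p k = fT D s w := by
  induction s with
  | zero =>
    rw [D.M_zero, fT, Finset.Icc_eq_empty one_pos.not_ge, Finset.prod_empty]
    refine prod_coordWt_div_eq_one (fun k hk => hP.p_eq_half_of_nonneg ?_) w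
    have := (Finset.mem_Ioc.1 hk).1
    omega
  | succ s ih =>
    have one_le : 1 ≤ s + 1 := Nat.le_add_left 1 s
    have M_lt_N := D.M_lt_N_succ s
    have N_le_M := D.two_mul_N_le_M one_le
    calc ∏ k ∈ Finset.Ioc (-(D.M (s + 1) : ℤ)) l, coordWt (p k) (w k) / p k
        = (∏ k ∈ Finset.Ioc (-(D.M (s + 1) : ℤ)) (-D.N (s + 1)), coordWt (p k) (w k) / p k)
          * ((∏ k ∈ Finset.Ioc (-(D.N (s + 1) : ℤ)) (-D.M s), coordWt (p k) (w k) / p k)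
            * ∏ k ∈ Finset.Ioc (-(D.M s : ℤ)) l, coordWt (p k) (w k) / p k) := by
          rw [prod_Ioc_mul_prod_Ioc _ (by omega) (by omega),
            prod_Ioc_mul_prod_Ioc _ (by omega) (by omega)]
      _ = 1 * (D.lam (s + 1) ^ Ups D (s + 1) w * fT D s w) := by
          rw [prod_coordWt_div_eq_one (fun k => hP.p_eq_half_of_mem_Ioc one_le),
            hP.prod_coordWt_div_eq_lam_zpow, ih]
      _ = fT D (s + 1) w := by rw [one_mul, mul_comm, D.fT_succ]

theorem prod_coordWt_eq (hP : IsKosloffMeasure D p P) {s : ℕ} (hs : 1 ≤ s) {a l : ℤ}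
    (ha : a ∈ Set.Icc (-(D.M s : ℤ)) (-D.N s)) (hl : 0 ≤ l) (w : Xspace) :
    ∏ k ∈ Finset.Ioc a l, coordWt (p k) (w k) = (∏ k ∈ Finset.Ioc a l, p k) * fT D s w := by
  have left_end_eq_one : ∏ k ∈ Finset.Ioc (-(D.M s : ℤ)) a, coordWt (p k) (w k) / p k = 1 :=
    prod_coordWt_div_eq_one
      (fun k hk => hP.p_eq_half_of_mem_Ioc hs (Finset.Ioc_subset_Ioc_right ha.2 hk)) w
  have p_ne_zero : ∏ k ∈ Finset.Ioc a l, p k ≠ 0 :=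
    Finset.prod_ne_zero_iff.2 fun k _ => (hP.p_mem_Ioo k).1.ne'
  rw [← hP.prod_coordWt_div_eq_fT s hl w,
    ← prod_Ioc_mul_prod_Ioc _ ha.1 (ha.2.trans (by omega)), left_end_eq_one, one_mul,
    Finset.prod_div_distrib, mul_div_cancel₀ _ p_ne_zero]

theorem prod_p_Ioc_sub_eq (hP : IsKosloffMeasure D p P) {s n : ℕ} (hs : 1 ≤ s) (hn : n ≤ D.N s) :
    ∏ k ∈ Finset.Ioc (-(D.M s : ℤ)) (D.M s - n), p k = ∏ k ∈ D.window n s, p k := by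
  have N_le_M := D.two_mul_N_le_M hs
  have left_end : ∏ k ∈ Finset.Ioc (-(D.M s : ℤ)) (-D.M s + n), p k = (1 / 2) ^ n := by
    rw [Finset.prod_congr rfl fun k hk => hP.p_eq_half_of_mem_Ioc hs
      (Finset.Ioc_subset_Ioc_right (by omega) hk)]
    simp
  have right_end : ∏ k ∈ Finset.Ioc (D.M s - n : ℤ) (D.M s), p k = (1 / 2) ^ n := by
    rw [Finset.prod_congr rfl fun k hk => hP.p_eq_half_of_nonneg
      (by have := (Finset.mem_Ioc.1 hk).1; omega)]
    simp
  have middle : (-D.M s + n : ℤ) ≤ D.M s - n := by omega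
  rw [KosloffData.window,
    ← prod_Ioc_mul_prod_Ioc _ (show (-D.M s : ℤ) ≤ -D.M s + n by omega) middle,
    ← prod_Ioc_mul_prod_Ioc _ middle (show (D.M s - n : ℤ) ≤ D.M s by omega),
    left_end, right_end, mul_comm]

theorem map_shiftInv_iterate_window (hP : IsKosloffMeasure D p P) {s n : ℕ} (hs : 1 ≤ s)
    (hn : n ≤ D.N s) (b : Xspace) :
    P.map shiftInv^[n] {w | ∀ i ∈ D.window n s, w i = b i}
      = ENNReal.ofReal (D.fRatio s n b) * P {w | ∀ i ∈ D.window n s, w i = b i} := by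
  have N_le_M := D.two_mul_N_le_M hs
  rw [Measure.map_apply (measurable_shiftInv.iterate n) (measurableSet_forall_mem_eq _ b),
    KosloffData.window, shiftInv_iterate_preimage_cylinder, hP.cylinder_apply, hP.cylinder_apply,
    ← ENNReal.ofReal_mul (D.fRatio_pos s n b).le,
    hP.prod_coordWt_eq hs ⟨le_rfl, by omega⟩ (by omega),
    hP.prod_coordWt_eq hs ⟨by omega, by omega⟩ (by omega), hP.prod_p_Ioc_sub_eq hs hn,
    KosloffData.window, KosloffData.fRatio]
  congr 1
  field_simp [(D.fT_pos s b).ne']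

theorem map_shiftInv_iterate_le_withDensity (hP : IsKosloffMeasure D p P) {t n : ℕ}
    (hn : n ≤ D.M t) :
    P.map shiftInv^[n]
      ≤ P.withDensity fun w => ENNReal.ofReal (Real.exp (D.epsTail t) * D.fRatio t n w) := by
  have := hP.1
  have := D.isFiniteMeasure_withDensity_fRatio P (Real.exp (D.epsTail t)) t n
  refine D.measure_le_of_eventually_window_le n <|
    (eventually_gt_atTop t).mono fun s hts b => ?_
  rw [hP.map_shiftInv_iterate_window (Nat.one_le_of_lt hts) (hn.trans (D.M_lt_N hts).le),
    D.withDensity_window hn hts P fun r => ENNReal.ofReal (Real.exp (D.epsTail t) * r)]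
  gcongr
  exact (D.fRatio_mem_Icc hts.le hn b).2

theorem withDensity_le_map_shiftInv_iterate (hP : IsKosloffMeasure D p P) {t n : ℕ}
    (hn : n ≤ D.M t) :
    P.withDensity (fun w => ENNReal.ofReal (Real.exp (-D.epsTail t) * D.fRatio t n w))
      ≤ P.map shiftInv^[n] := by
  have := hP.1
  have := D.isFiniteMeasure_withDensity_fRatio P (Real.exp (-D.epsTail t)) t n
  refine D.measure_le_of_eventually_window_le n <|
    (eventually_gt_atTop t).mono fun s hts b => ?_
  rw [hP.map_shiftInv_iterate_window (Nat.one_le_of_lt hts) (hn.trans (D.M_lt_N hts).le),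
    D.withDensity_window hn hts P fun r => ENNReal.ofReal (Real.exp (-D.epsTail t) * r)]
  gcongr
  exact (D.fRatio_mem_Icc hts.le hn b).1

theorem rnD_toReal_mem_Icc (hP : IsKosloffMeasure D p P) {t n : ℕ} (hn : n ≤ D.M t) :
    ∀ᵐ w ∂P, (rnD P n w).toReal ∈ Set.Icc (Real.exp (-D.epsTail t) * D.fRatio t n w)
      (Real.exp (D.epsTail t) * D.fRatio t n w) := by
  have := hP.1
  have upper := hP.map_shiftInv_iterate_le_withDensity hn
  have lower := hP.withDensity_le_map_shiftInv_iterate hn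
  have ac : P.map shiftInv^[n] ≪ P :=
    (Measure.absolutelyContinuous_of_le upper).trans (withDensity_absolutelyContinuous _ _)
  have : (P.map shiftInv^[n]).HaveLebesgueDecomposition P :=
    Measure.haveLebesgueDecomposition_of_finiteMeasure
  have measurable_bound : Measurable fun w =>
      ENNReal.ofReal (Real.exp (-D.epsTail t) * D.fRatio t n w) :=
    ((D.continuous_fRatio t n).measurable.const_mul _).ennreal_ofReal
  filter_upwards [rnDeriv_le_of_le_withDensity upper,
    le_rnDeriv_of_withDensity_le ac measurable_bound lower] with w le_upper lower_le
  have fRatio_nonneg := (D.fRatio_pos t n w).le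
  exact ⟨(ENNReal.ofReal_le_iff_le_toReal (le_upper.trans_lt ENNReal.ofReal_lt_top).ne).1 lower_le,
    ENNReal.toReal_le_of_le_ofReal (by positivity) le_upper⟩

theorem rnD_mul_fT_div_fT_mem_Icc (hP : IsKosloffMeasure D p P) {t n : ℕ} (hn : n ≤ D.M t) :
    ∀ᵐ w ∂P, (rnD P n w).toReal * fT D t w / fT D t (shiftT^[n] w)
      ∈ Set.Icc (Real.exp (-D.epsTail t)) (Real.exp (D.epsTail t)) := by
  filter_upwards [hP.rnD_toReal_mem_Icc hn] with w hw
  rw [← div_div_eq_mul_div]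
  have fRatio_pos : 0 < fT D t (shiftT^[n] w) / fT D t w := D.fRatio_pos t n w
  exact ⟨(le_div_iff₀ fRatio_pos).2 hw.1, (div_le_iff₀ fRatio_pos).2 hw.2⟩

end IsKosloffMeasure

theorem rnDeriv_eq_K_mul_f_ratio_general (D : KosloffData) (p : ℤ → ℝ) (P : Measure Xspace)
    (hP : IsKosloffMeasure D p P) :
    (∀ (t n : ℕ) (w : Xspace),
      (rnD P n w).toReal =
        ((rnD P n w).toReal * fT D t w / fT D t (shiftT^[n] w))
          * (fT D t (shiftT^[n] w) / fT D t w)) ∧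
    (∀ δ : ℝ, 0 < δ → ∀ᶠ t in atTop, ∀ n ≤ D.M t, ∀ᵐ w ∂P,
      |(rnD P n w).toReal * fT D t w / fT D t (shiftT^[n] w) - 1| ≤ δ) := by
  refine ⟨fun t n w => ?_, fun δ hδ => ?_⟩
  · have unshifted := (D.fT_pos t w).ne'
    have shifted := (D.fT_pos t (shiftT^[n] w)).ne'
    field_simp
  have exp_tail : Tendsto (fun t => Real.exp (D.epsTail t)) atTop (𝓝 1) := by
    simpa using D.tendsto_epsTail.rexp
  have exp_neg_tail : Tendsto (fun t => Real.exp (-D.epsTail t)) atTop (𝓝 1) := by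
    simpa using D.tendsto_epsTail.neg.rexp
  filter_upwards [exp_tail.eventually_le_const (lt_add_of_pos_right 1 hδ),
    exp_neg_tail.eventually_const_le (sub_lt_self 1 hδ)] with t upper lower n hn
  filter_upwards [hP.rnD_mul_fT_div_fT_mem_Icc hn] with w hw
  rw [abs_sub_le_iff]
  exact ⟨by linarith [hw.2], by linarith [hw.1]⟩

/-- for `N_{t(n)-1} ≤ n < M_{t(n)-1}` one has
`(Tⁿ)'(w) = K_n(w) · f_{t(n)-1}(Tⁿw)/f_{t(n)-1}(w)` where
`K_n(w) = (Tⁿ)'(w) · f_{t(n)-1}(w)/f_{t(n)-1}(Tⁿw)` tends to `1` uniformly (a.e.) in `w`. -/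
theorem rnDeriv_eq_K_mul_f_ratio (D : KosloffData) (p : ℤ → ℝ) (P : Measure Xspace)
    (hP : IsKosloffMeasure D p P) :
    (∀ n : ℕ, D.N (tOf D n - 1) ≤ n → n < D.M (tOf D n - 1) → ∀ w : Xspace,
      (rnD P n w).toReal =
        ((rnD P n w).toReal * fT D (tOf D n - 1) w / fT D (tOf D n - 1) (shiftT^[n] w))
          * (fT D (tOf D n - 1) (shiftT^[n] w) / fT D (tOf D n - 1) w)) ∧
    (∀ δ : ℝ, 0 < δ → ∃ n₀ : ℕ, ∀ n : ℕ, n₀ ≤ n →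
      D.N (tOf D n - 1) ≤ n → n < D.M (tOf D n - 1) →
      ∀ᵐ w ∂P,
        |(rnD P n w).toReal * fT D (tOf D n - 1) w / fT D (tOf D n - 1) (shiftT^[n] w) - 1|
          ≤ δ) := by
  have h := rnDeriv_eq_K_mul_f_ratio_general D p P hP
  have tendsto_sub_one := (tendsto_sub_atTop_nat 1).comp D.tendsto_tOf_atTop
  exact ⟨fun n _ _ => h.1 (tOf D n - 1) n, fun δ hδ =>
    (eventually_atTop.1 (tendsto_sub_one.eventually (h.2 δ hδ))).imp
      fun n₀ hn₀ n hn _ hM => hn₀ n hn n hM.le⟩
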